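/- Let q be a prime power and let w_1, w_2 be positive integers; use weights (1, w_1, w_2) on 𝔽_q[x_0, x_1, x_2]. Set d_1 = (q−1)/gcd(q−1, w_1), d_2 = (q−1)/gcd(q−1, w_2), and Y = {(1, t_1^{w_1}, t_2^{w_2}) : t_1, t_2 ∈ 𝔽_q^×} ⊆ 𝔽_q^3. If α ≥ w_1(d_1 − 1) + w_2(d_2 − 1), then the minimum distance of the code C_{α,Y} equals 1; that is, there is a codeword c ∈ C_{α,Y} that is nonzero at exactly one point of Y. -/

import Mathlib

open MvPolynomial

/-- Evaluation of multivariate polynomials at the points of a set `Y`, as a linear map. -/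
noncomputable def evalOn {n : ℕ} (F : Type) [CommSemiring F] (Y : Set (Fin n → F)) :
    MvPolynomial (Fin n) F →ₗ[F] (Y → F) where
  toFun P := fun y => eval y.val P
  map_add' := by intro P Q; funext y; simp
  map_smul' := by intro c P; funext y; simp [MvPolynomial.smul_eval]

/-- The evaluation code: image of the space of weighted homogeneous polynomials of
degree `α` under evaluation at the points of `Y`. -/
noncomputable def code {n : ℕ} (F : Type) [Field F] (w : Fin n → ℕ) (α : ℕ)
    (Y : Set (Fin n → F)) : Submodule F (Y → F) :=
  Submodule.map (evalOn F Y) (weightedHomogeneousSubmodule F w α)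

/-! Homogenised with respect to a variable `X o` of weight `1`, the linear form `X i - a` becomes
`X i - a * X o ^ w i`, of weighted degree `w i`. Multiplying these over all the coordinate values
`a` other than those of one chosen point of a finite grid isolates that point, and a power of
`X o`, which evaluates to `1` on the slice `y o = 1`, makes up the remaining degree. For the grid
of `w i`-th powers of units, cyclicity of the unit group says how many values the `i`-th
coordinate takes. -/

section AvoidingPoly

variable {σ R : Type*} [CommRing R]

theorem isWeightedHomogeneous_X_sub_C_mul_X_pow {w : σ → ℕ} {o : σ}
    (ho : w o = 1) (i : σ) (a : R) :
    IsWeightedHomogeneous w (X i - C a * X o ^ w i) (w i) := by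
  have hpow : IsWeightedHomogeneous w (X o ^ w i : MvPolynomial σ R) (w i) := by
    simpa only [ho, smul_eq_mul, mul_one] using (isWeightedHomogeneous_X R w o).pow (w i)
  exact (isWeightedHomogeneous_X R w i).sub (hpow.C_mul a)

variable [Fintype σ]

/-- The polynomial which, on the slice `y o = 1`, vanishes exactly when some coordinate `y i` lies
in the forbidden set `S i`; it serves to separate a point of a grid from all the others. The factor
`X i - a` is homogenised by the variable `X o`, meant to have weight `1`. -/
noncomputable def avoidingPoly (w : σ → ℕ) (o : σ) (S : σ → Finset R) : MvPolynomial σ R :=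
  ∏ i, ∏ a ∈ S i, (X i - C a * X o ^ w i)

theorem isWeightedHomogeneous_avoidingPoly {w : σ → ℕ} {o : σ} (ho : w o = 1)
    (S : σ → Finset R) :
    IsWeightedHomogeneous w (avoidingPoly w o S) (∑ i, w i * (S i).card) := by
  refine IsWeightedHomogeneous.prod _ _ _ fun i _ ↦ ?_
  simpa only [Finset.sum_const, smul_eq_mul, mul_comm] using
    IsWeightedHomogeneous.prod (S i) _ (fun _ ↦ w i)
      fun a _ ↦ isWeightedHomogeneous_X_sub_C_mul_X_pow ho i a

theorem eval_avoidingPoly_ne_zero_iff [IsDomain R] (w : σ → ℕ) {o : σ} (S : σ → Finset R)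
    {y : σ → R} (hy : y o = 1) : eval y (avoidingPoly w o S) ≠ 0 ↔ ∀ i, y i ∉ S i := by
  simp [avoidingPoly, hy, Finset.prod_eq_zero_iff, sub_eq_zero]

end AvoidingPoly

theorem mem_code_of_isWeightedHomogeneous {n : ℕ} {F : Type} [Field F] {w : Fin n → ℕ} {α : ℕ}
    {P : MvPolynomial (Fin n) F} (hP : IsWeightedHomogeneous w P α) (Y : Set (Fin n → F)) :
    (fun y : Y ↦ eval y.val P) ∈ code F w α Y :=
  Submodule.mem_map_of_mem (f := evalOn F Y) hP

theorem exists_mem_code_support_eq_singleton {n : ℕ} {F : Type} [Field F] {w : Fin n → ℕ}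
    {o : Fin n} (ho : w o = 1) {A : Fin n → Finset F} (hA : A o = {1}) {Y : Set (Fin n → F)}
    (hY : ∀ y ∈ Y, ∀ i, y i ∈ A i) {α : ℕ} (hα : ∑ i, w i * ((A i).card - 1) ≤ α) (p : Y) :
    ∃ c ∈ code F w α Y, Function.support c = {p} := by
  classical
  let S i := (A i).erase (p.val i)
  have hdeg : ∑ i, w i * (S i).card = ∑ i, w i * ((A i).card - 1) := by
    simp only [S, Finset.card_erase_of_mem (hY p p.2 _)]
  obtain ⟨k, rfl⟩ := Nat.exists_eq_add_of_le (hdeg.trans_le hα)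
  have hP : IsWeightedHomogeneous w (avoidingPoly w o S * X o ^ k)
      (∑ i, w i * (S i).card + k) := by
    simpa only [ho, smul_eq_mul, mul_one] using
      (isWeightedHomogeneous_avoidingPoly ho S).mul ((isWeightedHomogeneous_X F w o).pow k)
  refine ⟨_, mem_code_of_isWeightedHomogeneous hP Y, Set.ext fun y ↦ ?_⟩
  have hy : y.val o = 1 := by simpa only [hA, Finset.mem_singleton] using hY y y.2 o
  have havoid : (∀ i, y.val i ∉ S i) ↔ y = p := by
    simp only [S, Finset.mem_erase, hY y y.2, and_true, not_not, Subtype.ext_iff, funext_iff]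
  simpa only [Function.mem_support, map_mul, map_pow, eval_X, hy, one_pow, mul_one,
    Set.mem_singleton_iff, ← havoid] using eval_avoidingPoly_ne_zero_iff w S hy

theorem card_image_units_pow {R : Type*} [CommRing R] [IsDomain R] [DecidableEq R] [Fintype Rˣ]
    (k : ℕ) :
    (Finset.univ.image fun t : Rˣ ↦ (t : R) ^ k).card =
      Fintype.card Rˣ / (Fintype.card Rˣ).gcd k := by
  have hrange : ↑(Finset.univ.image fun t : Rˣ ↦ (t : R) ^ k) =
      Units.val '' ((powMonoidHom k : Rˣ →* Rˣ).range : Set Rˣ) := by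
    ext
    simp
  calc (Finset.univ.image fun t : Rˣ ↦ (t : R) ^ k).card
      = (Units.val '' ((powMonoidHom k : Rˣ →* Rˣ).range : Set Rˣ)).ncard := by
        rw [← hrange, Set.ncard_coe_finset]
    _ = Nat.card (powMonoidHom k : Rˣ →* Rˣ).range :=
        Set.ncard_image_of_injective _ Units.val_injective
    _ = Fintype.card Rˣ / (Fintype.card Rˣ).gcd k := by
        rw [IsCyclic.card_powMonoidHom_range, Nat.card_eq_fintype_card]

theorem stmt17_general (F : Type) [Field F] [Fintype F] {n : ℕ} (w : Fin n → ℕ)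
    (Y : Set (Fin (n + 1) → F))
    (hY : Y = {y | ∃ t : Fin n → Fˣ, y = Matrix.vecCons 1 fun i ↦ (t i : F) ^ w i})
    (α : ℕ) (hα : ∑ i, w i *
      ((Fintype.card F - 1) / (Fintype.card F - 1).gcd (w i) - 1) ≤ α) :
    ∃ c ∈ code F (Matrix.vecCons 1 w) α Y, {p : Y | c p ≠ 0}.ncard = 1 := by
  classical
  let A : Fin (n + 1) → Finset F :=
    Matrix.vecCons {1} fun i ↦ Finset.univ.image fun t : Fˣ ↦ (t : F) ^ w i
  have hYA : ∀ y ∈ Y, ∀ i, y i ∈ A i := by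
    rw [hY]
    rintro _ ⟨t, rfl⟩ i
    cases i using Fin.cases <;> simp [A]
  have hdeg : ∑ i, Matrix.vecCons 1 w i * ((A i).card - 1) ≤ α := by
    simpa [A, Fin.sum_univ_succ, card_image_units_pow, Fintype.card_units] using hα
  have hp : Matrix.vecCons 1 (fun _ ↦ 1) ∈ Y := by
    rw [hY]
    exact ⟨1, by simp⟩
  obtain ⟨c, hc, hsupp⟩ :=
    exists_mem_code_support_eq_singleton (o := 0) rfl rfl hYA hdeg ⟨_, hp⟩
  exact ⟨c, hc, Set.ncard_eq_one.2 ⟨_, hsupp⟩⟩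

/-- With `q` the cardinality of a finite field `𝔽`, positive
integers `w₁, w₂`, weights `(1, w₁, w₂)` on `𝔽[x₀, x₁, x₂]`,
`dᵢ = (q-1)/gcd(q-1, wᵢ)` and `Y = {(1, t₁^{w₁}, t₂^{w₂}) : t₁, t₂ ∈ 𝔽ˣ}`:
if `α ≥ w₁(d₁-1) + w₂(d₂-1)` then the minimum distance of `C_{α,Y}` equals `1`,
i.e. some codeword is nonzero at exactly one point of `Y`. -/
theorem stmt17 (F : Type) [Field F] [Fintype F] (q : ℕ) (hq : Fintype.card F = q)
    (w1 w2 : ℕ) (hw1 : 0 < w1) (hw2 : 0 < w2)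
    (d1 d2 : ℕ) (hd1 : d1 = (q - 1) / Nat.gcd (q - 1) w1)
    (hd2 : d2 = (q - 1) / Nat.gcd (q - 1) w2)
    (Y : Set (Fin 3 → F))
    (hY : Y = {y | ∃ t1 t2 : Fˣ, y = ![1, (t1 : F) ^ w1, (t2 : F) ^ w2]})
    (α : ℕ) (hα : w1 * (d1 - 1) + w2 * (d2 - 1) ≤ α) :
    ∃ c ∈ code F ![1, w1, w2] α Y, {p : Y | c p ≠ 0}.ncard = 1 := by
  subst hq hd1 hd2
  refine stmt17_general F ![w1, w2] Y ?_ α (by simpa using hα)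
  simp [hY, Fin.exists_fin_succ_pi, funext_iff, Fin.forall_fin_succ]
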